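/- arXiv:2508.05349 — 4 statements merged into one kernel-verified Lean document; each statement's English description precedes it below -/
import Mathlib

section
/- For every real r > 1 and every integer n ≥ 2, the function h ↦ arccos( sin(arctan(h/n)) / r ) - arccos( sin(arctan(h/n)) ) is strictly increasing on ℝ. -/
open Real

theorem aux_mono (r : ℝ) (hr : 1 < r) :
    StrictMonoOn (fun s : ℝ => Real.arccos (s / r) - Real.arccos s) (Set.Icc (-1) 1) := by
  have hr0 : 0 < r := by linarith
  apply strictMonoOn_of_deriv_pos (convex_Icc _ _)
  · exact ((Real.continuous_arccos.comp (continuous_id.div_const r)).sub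
      Real.continuous_arccos).continuousOn
  · intro s hs
    rw [interior_Icc] at hs
    obtain ⟨h1, h2⟩ := hs
    have a1 : s / r < 1 := by rw [div_lt_one hr0]; linarith
    have a2 : -1 < s / r := by rw [lt_div_iff₀ hr0]; linarith
    have d1 := (Real.hasDerivAt_arccos a2.ne' a1.ne).comp s ((hasDerivAt_id s).div_const r)
    have d2 := Real.hasDerivAt_arccos h1.ne' h2.ne
    have d := d1.sub d2
    have e : deriv (fun s : ℝ => Real.arccos (s / r) - Real.arccos s) s = _ := d.deriv
    rw [e]
    have p : 0 < 1 - s ^ 2 := by nlinarith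
    have hq : (s / r) ^ 2 ≤ s ^ 2 := by
      rw [div_pow]
      exact div_le_self (sq_nonneg s) (by nlinarith)
    have q1 : √(1 - s ^ 2) ≤ √(1 - (s / r) ^ 2) := Real.sqrt_le_sqrt (by linarith)
    have q0 : 0 < √(1 - s ^ 2) := Real.sqrt_pos.mpr p
    have q2 : 1 / √(1 - (s / r) ^ 2) ≤ 1 / √(1 - s ^ 2) := one_div_le_one_div_of_le q0 q1
    have q3 : 0 < 1 / √(1 - (s / r) ^ 2) := one_div_pos.mpr (q0.trans_le q1)
    have q4 : 1 / r < 1 := by rw [div_lt_one hr0]; exact hr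
    simp only [id] at *
    nlinarith [mul_pos q3 (sub_pos.mpr q4)]

theorem stmt2 (r : ℝ) (hr : 1 < r) (n : ℕ) (hn : 2 ≤ n) :
    StrictMono (fun h : ℝ =>
      Real.arccos (Real.sin (Real.arctan (h / n)) / r)
        - Real.arccos (Real.sin (Real.arctan (h / n)))) := by
  intro a b hab
  have hn0 : (0 : ℝ) < n := by exact_mod_cast (by omega : 0 < n)
  refine aux_mono r hr (Real.sin_mem_Icc _) (Real.sin_mem_Icc _) ?_
  exact Real.strictMonoOn_sin
    ⟨(Real.neg_pi_div_two_lt_arctan _).le, (Real.arctan_lt_pi_div_two _).le⟩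
    ⟨(Real.neg_pi_div_two_lt_arctan _).le, (Real.arctan_lt_pi_div_two _).le⟩
    (Real.arctan_strictMono (div_lt_div_of_pos_right hab hn0))
end

section
/- For every δ ∈ [0, π/2) one has sin( (1/4)(π/2 - δ) ) / cos(δ) > 1/4. Moreover, the function δ ↦ sin( (1/4)(π/2 - δ) ) / cos(δ) is strictly decreasing on [0, π/2) and tends to 1/4 as δ → (π/2)⁻. -/
open Real Filter

theorem stmt5_aux (δ : ℝ) (h : δ ∈ Set.Ioo (-(π / 2)) (π / 2)) :
    Real.sin ((1 / 4) * (π / 2 - δ)) / Real.cos δ =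
      1 / (4 * (Real.cos ((1 / 4) * (π / 2 - δ)) * Real.cos (2 * ((1 / 4) * (π / 2 - δ))))) := by
  obtain ⟨h0, h1⟩ := h
  have hc : Real.cos δ = 4 * Real.sin ((1 / 4) * (π / 2 - δ)) *
      (Real.cos ((1 / 4) * (π / 2 - δ)) * Real.cos (2 * ((1 / 4) * (π / 2 - δ)))) := by
    rw [← Real.sin_pi_div_two_sub,
      show π / 2 - δ = 2 * (2 * ((1 / 4) * (π / 2 - δ))) by ring, Real.sin_two_mul]
    rw [Real.sin_two_mul]
    ring_nf
  have hs : 0 < Real.sin ((1 / 4) * (π / 2 - δ)) :=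
    Real.sin_pos_of_pos_of_lt_pi (by linarith) (by linarith)
  have hp : 0 < Real.cos δ := Real.cos_pos_of_mem_Ioo ⟨h0, h1⟩
  rw [hc] at hp ⊢
  have h2 := pos_of_mul_pos_right hp (by positivity)
  generalize Real.cos ((1 / 4) * (π / 2 - δ)) * Real.cos (2 * ((1 / 4) * (π / 2 - δ))) = c at *
  generalize Real.sin ((1 / 4) * (π / 2 - δ)) = s at *
  field_simp

theorem stmt5_aux2 {u v : ℝ} (hu : 0 ≤ u) (huv : u < v) (hv : v ≤ π / 8) :
    0 < Real.cos v * Real.cos (2 * v) ∧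
    Real.cos v * Real.cos (2 * v) < Real.cos u * Real.cos (2 * u) := by
  have hpi := Real.pi_pos
  have a1 : 0 < Real.cos v := Real.cos_pos_of_mem_Ioo ⟨by linarith, by linarith⟩
  have a2 : 0 < Real.cos (2 * v) := Real.cos_pos_of_mem_Ioo ⟨by linarith, by linarith⟩
  have b1 : Real.cos v < Real.cos u :=
    Real.cos_lt_cos_of_nonneg_of_le_pi hu (by linarith) huv
  have b2 : Real.cos (2 * v) < Real.cos (2 * u) :=
    Real.cos_lt_cos_of_nonneg_of_le_pi (by linarith) (by linarith) (by linarith)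
  exact ⟨by positivity, mul_lt_mul'' b1 b2 a1.le a2.le⟩

theorem stmt5 :
    (∀ δ ∈ Set.Ico (0 : ℝ) (π / 2),
      1 / 4 < Real.sin ((1 / 4) * (π / 2 - δ)) / Real.cos δ) ∧
    StrictAntiOn (fun δ : ℝ => Real.sin ((1 / 4) * (π / 2 - δ)) / Real.cos δ)
      (Set.Ico (0 : ℝ) (π / 2)) ∧
    Tendsto (fun δ : ℝ => Real.sin ((1 / 4) * (π / 2 - δ)) / Real.cos δ)
      (nhdsWithin (π / 2) (Set.Iio (π / 2))) (nhds (1 / 4)) := by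
  have hpi := Real.pi_pos
  refine ⟨?_, ?_, ?_⟩
  · rintro δ ⟨h0, h1⟩
    rw [stmt5_aux δ ⟨by linarith, h1⟩]
    obtain ⟨p, q⟩ := stmt5_aux2 (u := 0) (v := (1 / 4) * (π / 2 - δ)) le_rfl
      (by linarith) (by linarith)
    simp only [mul_zero, Real.cos_zero, mul_one] at q
    exact one_div_lt_one_div_of_lt (by positivity) (by linarith)
  · rintro x ⟨hx0, hx1⟩ y ⟨hy0, hy1⟩ hxy
    simp only
    rw [stmt5_aux x ⟨by linarith, hx1⟩, stmt5_aux y ⟨by linarith, hy1⟩]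
    obtain ⟨p, q⟩ := stmt5_aux2 (u := (1 / 4) * (π / 2 - y)) (v := (1 / 4) * (π / 2 - x))
      (by linarith) (by linarith) (by linarith)
    exact one_div_lt_one_div_of_lt (by positivity) (by linarith)
  · have hT : Tendsto (fun δ : ℝ => 1 / (4 * (Real.cos ((1 / 4) * (π / 2 - δ)) *
        Real.cos (2 * ((1 / 4) * (π / 2 - δ))))))
        (nhdsWithin (π / 2) (Set.Iio (π / 2))) (nhds (1 / 4)) := by
      have hc : ContinuousAt (fun δ : ℝ => 1 / (4 * (Real.cos ((1 / 4) * (π / 2 - δ)) *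
          Real.cos (2 * ((1 / 4) * (π / 2 - δ)))))) (π / 2) := by
        apply ContinuousAt.div
        · fun_prop
        · fun_prop
        · simp
      have h := hc.tendsto
      simp only [sub_self, mul_zero, Real.cos_zero, mul_one] at h
      exact h.mono_left nhdsWithin_le_nhds
    refine hT.congr' ?_
    filter_upwards [Ioo_mem_nhdsLT (show -(π / 2) < π / 2 by linarith)] with δ hδ
    exact (stmt5_aux δ hδ).symm
end

section
/- Let A > 0 and c ∈ (0,1]. Let y : [0,∞) → ℝ be differentiable with y(t) ≥ 0 and y'(t) ≥ -A·√(1 + y(t)²) for all t ≥ 0, and suppose that ∫₀ᵗ y(s) ds ≤ c for all t ≥ 0. Then y(0)² ≤ (A² + 2A)·c. -/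
open Real

theorem stmt8 (A c : ℝ) (hA : 0 < A) (hc : c ∈ Set.Ioc (0 : ℝ) 1) (y y' : ℝ → ℝ)
    (hderiv : ∀ t ∈ Set.Ici (0 : ℝ), HasDerivAt y (y' t) t)
    (hnn : ∀ t ∈ Set.Ici (0 : ℝ), 0 ≤ y t)
    (hineq : ∀ t ∈ Set.Ici (0 : ℝ), y' t ≥ -A * Real.sqrt (1 + (y t) ^ 2))
    (hint : ∀ t ∈ Set.Ici (0 : ℝ), ∫ s in (0 : ℝ)..t, y s ≤ c) :
    (y 0) ^ 2 ≤ (A ^ 2 + 2 * A) * c := by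
  obtain ⟨hc0, hc1⟩ := hc
  have hz : Continuous (fun t : ℝ => y (max t 0)) := by
    rw [continuous_iff_continuousAt]
    intro t
    have h1 : ContinuousAt y (max t 0) := (hderiv _ (le_max_right t 0)).continuousAt
    exact ContinuousAt.comp (f := fun t : ℝ => max t 0) h1 (by fun_prop)
  set z : ℝ → ℝ := fun t => y (max t 0) with hzdef
  have hzy : ∀ t, 0 ≤ t → z t = y t := fun t ht => by simp [hzdef, max_eq_left ht]
  have hzint : ∀ t, 0 ≤ t → ∫ s in (0 : ℝ)..t, z s ≤ c := by
    intro t ht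
    have : ∫ s in (0 : ℝ)..t, z s = ∫ s in (0 : ℝ)..t, y s := by
      apply intervalIntegral.integral_congr
      intro s hs
      rw [Set.uIcc_of_le ht] at hs
      exact hzy s hs.1
    rw [this]
    exact hint t ht
  have hF : ∀ t, 0 ≤ t → HasDerivAt (fun t => √(1 + (y t) ^ 2) + A * ∫ s in (0 : ℝ)..t, z s)
      ((2 * y t * y' t) / (2 * √(1 + (y t) ^ 2)) + A * y t) t := by
    intro t ht
    have h1 : HasDerivAt (fun t => 1 + (y t) ^ 2) (2 * y t * y' t) t := by
      simpa using ((hderiv t ht).pow 2).const_add 1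
    have h2 := h1.sqrt (by positivity)
    have h3 := (hz.integral_hasStrictDerivAt 0 t).hasDerivAt.const_mul A
    rw [hzy t ht] at h3
    exact h2.add h3
  have hmono : MonotoneOn (fun t => √(1 + (y t) ^ 2) + A * ∫ s in (0 : ℝ)..t, z s)
      (Set.Ici 0) := by
    apply monotoneOn_of_deriv_nonneg (convex_Ici 0)
    · exact fun t ht => (hF t ht).continuousAt.continuousWithinAt
    · rw [interior_Ici]
      exact fun t ht => (hF t (le_of_lt ht)).differentiableAt.differentiableWithinAt
    · rw [interior_Ici]
      intro t ht
      have ht : 0 ≤ t := le_of_lt ht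
      rw [(hF t ht).deriv]
      have hs : 0 < √(1 + (y t) ^ 2) := Real.sqrt_pos.2 (by positivity)
      have h1 := hineq t ht
      have h2 := hnn t ht
      have : -(A * y t) ≤ (2 * y t * y' t) / (2 * √(1 + (y t) ^ 2)) := by
        rw [le_div_iff₀ (by positivity)]
        nlinarith [mul_le_mul_of_nonneg_left h1 h2]
      linarith
  have hsmall : ∀ ε > 0, ∃ t, 0 ≤ t ∧ y t ≤ ε := by
    intro ε hε
    by_contra! h
    have hT : 0 ≤ 2 * c / ε := by positivity
    have h1 : ∫ s in (0 : ℝ)..(2 * c / ε), ε ≤ ∫ s in (0 : ℝ)..(2 * c / ε), z s := by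
      apply intervalIntegral.integral_mono_on hT (by simp) (hz.intervalIntegrable _ _)
      intro s hs
      rw [hzy s hs.1]
      exact (h s hs.1).le
    have h2 := hzint _ hT
    have h3 : 2 * c / ε * ε = 2 * c := by field_simp
    simp only [intervalIntegral.integral_const, smul_eq_mul, sub_zero, h3] at h1
    linarith
  have hG : √(1 + (y 0) ^ 2) ≤ 1 + A * c := by
    apply le_of_forall_pos_le_add
    intro ε hε
    obtain ⟨t, ht, hyt⟩ := hsmall ε hε
    have h1 := hmono (Set.mem_Ici.2 le_rfl) (Set.mem_Ici.2 ht) ht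
    simp only [intervalIntegral.integral_same, mul_zero, add_zero] at h1
    have h2 := mul_le_mul_of_nonneg_left (hzint t ht) hA.le
    have h0 := hnn t ht
    have h3 : √(1 + (y t) ^ 2) ≤ 1 + y t := by
      rw [Real.sqrt_le_left (by linarith)]
      nlinarith
    linarith
  rw [Real.sqrt_le_left (by positivity)] at hG
  have h4 : c ^ 2 ≤ c := by nlinarith
  nlinarith [mul_le_mul_of_nonneg_left h4 (sq_nonneg A)]
end

section
/- Let H ∈ ℝ and set T := (H + √(4 + H²))/2. Then T > 0 and T² = 1 + H·T, and for all λ₁, λ₂ ∈ ℝ with λ₁ + λ₂ = H, 1 + λ₁T ≠ 0 and 1 + λ₂T ≠ 0, one has tan(arctan λ₁ - arctan T) · tan(arctan λ₂ - arctan T) = (λ₁ - T)(λ₂ - T) / ((1 + λ₁T)(1 + λ₂T)) = 1/T² = 4/(H + √(4+H²))². -/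
open Real

theorem tan_arctan_sub_aux (a b : ℝ) :
    Real.tan (Real.arctan a - Real.arctan b) = (a - b) / (1 + a * b) := by
  have h : ∀ x : ℝ, ∀ k : ℤ, Real.arctan x ≠ (2 * k + 1) * π / 2 := fun x =>
    Real.cos_ne_zero_iff.mp (Real.cos_arctan_pos x).ne'
  rw [Real.tan_sub' ⟨h a, h b⟩, Real.tan_arctan, Real.tan_arctan]

theorem stmt12 (H : ℝ) :
    0 < (H + Real.sqrt (4 + H ^ 2)) / 2 ∧
    ((H + Real.sqrt (4 + H ^ 2)) / 2) ^ 2 = 1 + H * ((H + Real.sqrt (4 + H ^ 2)) / 2) ∧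
    ∀ l₁ l₂ : ℝ, l₁ + l₂ = H →
      1 + l₁ * ((H + Real.sqrt (4 + H ^ 2)) / 2) ≠ 0 →
      1 + l₂ * ((H + Real.sqrt (4 + H ^ 2)) / 2) ≠ 0 →
      (Real.tan (Real.arctan l₁ - Real.arctan ((H + Real.sqrt (4 + H ^ 2)) / 2))
          * Real.tan (Real.arctan l₂ - Real.arctan ((H + Real.sqrt (4 + H ^ 2)) / 2))
        = (l₁ - (H + Real.sqrt (4 + H ^ 2)) / 2) * (l₂ - (H + Real.sqrt (4 + H ^ 2)) / 2)
          / ((1 + l₁ * ((H + Real.sqrt (4 + H ^ 2)) / 2))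
              * (1 + l₂ * ((H + Real.sqrt (4 + H ^ 2)) / 2)))) ∧
      ((l₁ - (H + Real.sqrt (4 + H ^ 2)) / 2) * (l₂ - (H + Real.sqrt (4 + H ^ 2)) / 2)
          / ((1 + l₁ * ((H + Real.sqrt (4 + H ^ 2)) / 2))
              * (1 + l₂ * ((H + Real.sqrt (4 + H ^ 2)) / 2)))
        = 1 / ((H + Real.sqrt (4 + H ^ 2)) / 2) ^ 2) ∧
      (1 / ((H + Real.sqrt (4 + H ^ 2)) / 2) ^ 2
        = 4 / (H + Real.sqrt (4 + H ^ 2)) ^ 2) := by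
  have hs : Real.sqrt (4 + H ^ 2) ^ 2 = 4 + H ^ 2 := Real.sq_sqrt (by positivity)
  have hpos : 0 < (H + Real.sqrt (4 + H ^ 2)) / 2 := by
    have h1 : |H| < Real.sqrt (4 + H ^ 2) := by
      rw [← Real.sqrt_sq_eq_abs]
      exact Real.sqrt_lt_sqrt (sq_nonneg H) (by linarith)
    linarith [neg_abs_le H]
  have hT : ((H + Real.sqrt (4 + H ^ 2)) / 2) ^ 2
      = 1 + H * ((H + Real.sqrt (4 + H ^ 2)) / 2) := by
    linear_combination hs / 4
  refine ⟨hpos, hT, ?_⟩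
  intro l₁ l₂ hl h1 h2
  refine ⟨?_, ?_, ?_⟩
  · rw [tan_arctan_sub_aux, tan_arctan_sub_aux, div_mul_div_comm]
  · generalize (H + Real.sqrt (4 + H ^ 2)) / 2 = T at *
    rw [div_eq_div_iff (mul_ne_zero h1 h2) (pow_ne_zero 2 hpos.ne')]
    subst hl
    linear_combination (T ^ 2 + 1) * hT
  · rw [div_pow, one_div_div]
    norm_num
end
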